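/- Let (G_n)_{n≥1} be a sequence of finite connected regular simple graphs with growth rates γ(G_n), such that the common degree Δ(G_n) tends to infinity as n → ∞ and every G_n has girth at least 5. Then liminf_{n→∞} γ(G_n)/Δ(G_n) ≥ (2e−1)/(e−1)², where e is Euler's number. (Proposition on regular graphs of girth ≥ 5; numerically (2e−1)/(e−1)² ≈ 1.506.) -/

import Mathlib

open MeasureTheory Filter Topology
open scoped ENNReal Classical

/-- The ballistic deposition height process on a graph `G`, started from `h0`,
driven by the sequence of chosen vertices `X`. -/
noncomputable def heightProcess {V : Type*} [Fintype V] (G : SimpleGraph V)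
    (h0 : V → ℕ) (X : ℕ → V) : ℕ → V → ℕ
  | 0 => h0
  | n + 1 => fun x =>
      if x = X n then
        1 + Finset.univ.sup (fun y =>
          if y = x ∨ G.Adj x y then heightProcess G h0 X n y else 0)
      else heightProcess G h0 X n x

/-- `X` is an i.i.d. sequence of uniformly distributed `V`-valued random variables on `(Ω, μ)`:
every finite cylinder event has the product-of-uniform probabilities. -/
def IsUniformIID {V : Type*} [Fintype V] {Ω : Type*} [MeasurableSpace Ω]
    (μ : Measure Ω) (X : ℕ → Ω → V) : Prop :=
  (∀ (n : ℕ) (v : V), MeasurableSet {ω | X n ω = v}) ∧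
  (∀ (n : ℕ) (f : ℕ → V), μ {ω | ∀ k < n, X k ω = f k} = (Fintype.card V : ℝ≥0∞)⁻¹ ^ n)

/-- `γ` is the growth rate of `G`: `γ > 0` and, for any i.i.d. uniform driving sequence,
almost surely `(#V/n) · max_x H_{x,n} → γ` and `(#V/n) · min_x H_{x,n} → γ`. -/
def IsGrowthRate {V : Type*} [Fintype V] (G : SimpleGraph V) (γ : ℝ) : Prop :=
  0 < γ ∧
  ∀ {Ω : Type} [MeasurableSpace Ω] (μ : Measure Ω) [IsProbabilityMeasure μ]
    (X : ℕ → Ω → V), IsUniformIID μ X →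
    (∀ᵐ ω ∂μ, Tendsto (fun n : ℕ =>
        (Fintype.card V : ℝ) *
          (⨆ x : V, (heightProcess G (fun _ => 0) (fun k => X k ω) n x : ℝ)) / n)
      atTop (𝓝 γ)) ∧
    (∀ᵐ ω ∂μ, Tendsto (fun n : ℕ =>
        (Fintype.card V : ℝ) *
          (⨅ x : V, (heightProcess G (fun _ => 0) (fun k => X k ω) n x : ℝ)) / n)
      atTop (𝓝 γ))

/-!
The height profile is a Markov chain, so if `Ψ` has generator at least `r` everywhere and
`Ψ H ≤ a * max H + C`, then taking expectations and passing to the limit gives `r ≤ a * γ`.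

With `Ψ H = -log ∑ exp (H x)` this yields `γ ≤ e (Δ + 1)`, without which the liminf could be a junk
value. For the lower bound, `Ψ` records up to four vertices at the best level `h` and up to four at
level `h + 1`. Vertices have few common neighbours, so `k` of them have about `k δ` neighbours, and
a particle falling next to a recorded vertex adds a vertex one level higher. The record therefore
moves like a finite Markov chain, for which an explicit integer table certifies the speed
`20 / 13 > (2 e - 1) / (e - 1) ^ 2`.
-/

section Deposition

open Finset

variable {V : Type*} [Fintype V] (G : SimpleGraph V)

/-- The closed neighbourhood `[v]` of the deposition dynamics, as a finset. -/
noncomputable def closedNbhd (v : V) : Finset V := insert v (G.neighborFinset v)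

/-- The height profile obtained from `H` by dropping a particle on `v`: one step of
`heightProcess`, as a map on profiles. -/
noncomputable def deposit (H : V → ℕ) (v : V) : V → ℕ :=
  Function.update H v (1 + (closedNbhd G v).sup H)

variable {G}

lemma deposit_self (H : V → ℕ) (v : V) : deposit G H v v = 1 + (closedNbhd G v).sup H :=
  Function.update_self ..

lemma heightProcess_succ (h0 : V → ℕ) (X : ℕ → V) (n : ℕ) :
    heightProcess G h0 X (n + 1) = deposit G (heightProcess G h0 X n) (X n) := by
  have closedNbhd_eq (v : V) : univ.filter (fun y => y = v ∨ G.Adj v y) = closedNbhd G v := by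
    ext y
    simp [closedNbhd]
  ext x
  simp only [heightProcess, deposit, Function.update_apply, sup_ite, closedNbhd_eq]
  split_ifs with hx
  · simp [hx]
  · rfl

lemma heightProcess_eq_foldl (h0 : V → ℕ) (X : ℕ → V) (n : ℕ) :
    heightProcess G h0 X n = (List.ofFn fun i : Fin n => X i).foldl (deposit G) h0 := by
  induction n with
  | zero => rfl
  | succ n ih =>
    rw [heightProcess_succ, ih, List.ofFn_succ', List.concat_eq_append, List.foldl_concat]
    rfl

lemma lt_deposit_self {H : V → ℕ} {v a : V} (ha : a ∈ closedNbhd G v) :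
    H a < deposit G H v v := by
  rw [deposit_self, Nat.lt_one_add_iff]
  exact le_sup ha

lemma exists_deposit_self_eq (G : SimpleGraph V) (H : V → ℕ) (v : V) :
    ∃ a ∈ closedNbhd G v, deposit G H v v = 1 + H a := by
  obtain ⟨a, ha, h⟩ := exists_mem_eq_sup (closedNbhd G v) ⟨v, mem_insert_self ..⟩ H
  exact ⟨a, ha, by rw [deposit_self, h]⟩

lemma le_deposit (G : SimpleGraph V) (H : V → ℕ) (v : V) : H ≤ deposit G H v :=
  le_update_self_iff.mpr <|
    (le_sup (mem_insert_self ..)).trans (Nat.le_add_left ..)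

lemma heightProcess_le {h0 : V → ℕ} {b : ℕ} (h0_le : ∀ x, h0 x ≤ b) (X : ℕ → V) (n : ℕ) (x : V) :
    heightProcess G h0 X n x ≤ b + n := by
  induction n generalizing x with
  | zero => exact h0_le x
  | succ n ih =>
    rw [heightProcess_succ]
    obtain rfl | hx := eq_or_ne x (X n)
    · obtain ⟨a, -, ha⟩ := exists_deposit_self_eq G (heightProcess G h0 X n) (X n)
      linarith [ih a]
    · rw [deposit, Function.update_of_ne hx]
      linarith [ih x]

/-- The generator of the continuous-time version of the process, in which particles fall on every
vertex independently at rate one. -/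
noncomputable def generator (G : SimpleGraph V) (Ψ : (V → ℕ) → ℝ) (H : V → ℕ) : ℝ :=
  ∑ v, (Ψ (deposit G H v) - Ψ H)

end Deposition

section UniformDriving

open Finset

variable {V Ω : Type*} [Fintype V] [MeasurableSpace Ω] {μ : Measure Ω} {X : ℕ → Ω → V}

lemma IsUniformIID.measurable [MeasurableSpace V] [MeasurableSingletonClass V]
    (hX : IsUniformIID μ X) (n : ℕ) : Measurable (X n) :=
  measurable_to_countable' (hX.1 n)

lemma IsUniformIID.integrable_comp [IsFiniteMeasure μ] (hX : IsUniformIID μ X) {n : ℕ}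
    (F : (Fin n → V) → ℝ) : Integrable (fun ω => F fun i => X i ω) μ := by
  let _ : MeasurableSpace V := ⊤
  have : MeasurableSingletonClass V := ⟨fun _ => trivial⟩
  exact (Integrable.of_finite (f := F)).comp_measurable
    (measurable_pi_lambda _ fun i => hX.measurable i)

lemma IsUniformIID.measure_eq [Nonempty V] (hX : IsUniformIID μ X) {n : ℕ} (f : Fin n → V) :
    μ {ω | (fun i : Fin n => X i ω) = f} = (Fintype.card V : ℝ≥0∞)⁻¹ ^ n := by
  rw [← hX.2 n (Function.extend Fin.val f fun _ => Classical.arbitrary V)]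
  congr 1 with ω
  simp only [funext_iff, Set.mem_ofPred_eq]
  refine ⟨fun h k hk => ?_, fun h i => ?_⟩
  · exact (h ⟨k, hk⟩).trans (Fin.val_injective.extend_apply f _ ⟨k, hk⟩).symm
  · rw [h i i.2, Fin.val_injective.extend_apply]

lemma IsUniformIID.integral_comp [IsFiniteMeasure μ] [Nonempty V] (hX : IsUniformIID μ X) {n : ℕ}
    (F : (Fin n → V) → ℝ) :
    ∫ ω, F (fun i => X i ω) ∂μ = (∑ f, F f) / (Fintype.card V : ℝ) ^ n := by
  let _ : MeasurableSpace V := ⊤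
  have : MeasurableSingletonClass V := ⟨fun _ => trivial⟩
  have hmeas : Measurable fun ω (i : Fin n) => X i ω :=
    measurable_pi_lambda _ fun i => hX.measurable i
  rw [← integral_map hmeas.aemeasurable Integrable.of_finite.aestronglyMeasurable,
    integral_fintype .of_finite, sum_div]
  refine sum_congr rfl fun f _ => ?_
  have hf : (fun ω (i : Fin n) => X i ω) ⁻¹' {f} = {ω | (fun i : Fin n => X i ω) = f} := rfl
  rw [map_measureReal_apply hmeas (measurableSet_singleton f), hf, Measure.real, hX.measure_eq]
  simp [div_eq_inv_mul]

lemma exists_isUniformIID (V : Type*) [Fintype V] [Nonempty V] :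
    ∃ (Ω : Type) (_ : MeasurableSpace Ω) (μ : Measure Ω) (_ : IsProbabilityMeasure μ)
      (X : ℕ → Ω → V), IsUniformIID μ X := by
  let e := Fintype.equivFin V
  have : Nonempty (Fin (Fintype.card V)) := e.nonempty_congr.mp ‹_›
  refine ⟨ℕ → Fin (Fintype.card V), inferInstance,
    Measure.infinitePi fun _ => (PMF.uniformOfFintype _).toMeasure, inferInstance,
    fun k ω => e.symm (ω k), fun n v => ?_, fun n f => ?_⟩
  · simp only [e.symm_apply_eq]
    exact measurableSet_eq_fun (measurable_pi_apply n) measurable_const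
  · have cylinder_eq : {ω : ℕ → Fin (Fintype.card V) | ∀ k < n, e.symm (ω k) = f k} =
        Set.pi (range n) fun k => {e (f k)} := by
      ext ω
      simp [Set.mem_pi, e.symm_apply_eq]
    rw [cylinder_eq, Measure.infinitePi_pi _ fun _ _ => measurableSet_singleton _]
    simp

end UniformDriving

section Drift

open Finset

variable {V Ω : Type*} [Fintype V] [MeasurableSpace Ω] {μ : Measure Ω} {X : ℕ → Ω → V}
  {G : SimpleGraph V} {h0 : V → ℕ} {Ψ : (V → ℕ) → ℝ} {r : ℝ}

lemma IsUniformIID.integrable_heightProcess [IsFiniteMeasure μ] (hX : IsUniformIID μ X)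
    (G : SimpleGraph V) (h0 : V → ℕ) (Ψ : (V → ℕ) → ℝ) (n : ℕ) :
    Integrable (fun ω => Ψ (heightProcess G h0 (fun k => X k ω) n)) μ := by
  simp only [heightProcess_eq_foldl]
  exact hX.integrable_comp fun f => Ψ ((List.ofFn f).foldl (deposit G) h0)

variable [Nonempty V]

lemma IsUniformIID.integral_heightProcess [IsFiniteMeasure μ] (hX : IsUniformIID μ X)
    (G : SimpleGraph V) (h0 : V → ℕ) (Ψ : (V → ℕ) → ℝ) (n : ℕ) :
    ∫ ω, Ψ (heightProcess G h0 (fun k => X k ω) n) ∂μ =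
      (∑ f : Fin n → V, Ψ ((List.ofFn f).foldl (deposit G) h0)) / (Fintype.card V : ℝ) ^ n := by
  simp only [heightProcess_eq_foldl]
  exact hX.integral_comp fun f => Ψ ((List.ofFn f).foldl (deposit G) h0)

lemma IsUniformIID.integral_generator [IsFiniteMeasure μ] (hX : IsUniformIID μ X)
    (G : SimpleGraph V) (h0 : V → ℕ) (Ψ : (V → ℕ) → ℝ) (n : ℕ) :
    ∫ ω, generator G Ψ (heightProcess G h0 (fun k => X k ω) n) ∂μ =
      Fintype.card V * (∫ ω, Ψ (heightProcess G h0 (fun k => X k ω) (n + 1)) ∂μ -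
        ∫ ω, Ψ (heightProcess G h0 (fun k => X k ω) n) ∂μ) := by
  have sum_succ : ∑ f : Fin (n + 1) → V, Ψ ((List.ofFn f).foldl (deposit G) h0) =
      ∑ f : Fin n → V, ∑ v, Ψ (deposit G ((List.ofFn f).foldl (deposit G) h0) v) := by
    rw [← (Fin.snocEquiv fun _ : Fin (n + 1) => V).sum_comp, Fintype.sum_prod_type_right]
    simp [Fin.snocEquiv, List.ofFn_succ', -List.ofFn_succ]
  rw [hX.integral_heightProcess, hX.integral_heightProcess, hX.integral_heightProcess, sum_succ]
  simp only [generator, sum_sub_distrib, sum_const, card_univ, nsmul_eq_mul, ← mul_sum]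
  field_simp
  ring

lemma IsUniformIID.le_integral_of_le_generator [IsProbabilityMeasure μ] (hX : IsUniformIID μ X)
    (hr : ∀ H, r ≤ generator G Ψ H) (n : ℕ) :
    Fintype.card V * Ψ h0 + n * r ≤
      Fintype.card V * ∫ ω, Ψ (heightProcess G h0 (fun k => X k ω) n) ∂μ := by
  induction n with
  | zero => simp [heightProcess]
  | succ n ih =>
    have drift : r ≤ ∫ ω, generator G Ψ (heightProcess G h0 (fun k => X k ω) n) ∂μ := by
      simpa using integral_mono (integrable_const r)
        (hX.integrable_heightProcess G h0 (generator G Ψ) n) fun ω => hr _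
    rw [hX.integral_generator] at drift
    push_cast
    linarith

end Drift

section GrowthRate

variable {V : Type*} [Fintype V] [Nonempty V] {G : SimpleGraph V} {γ : ℝ}

lemma IsGrowthRate.tendsto_integral {Ω : Type} [MeasurableSpace Ω] {μ : Measure Ω}
    [IsProbabilityMeasure μ] {X : ℕ → Ω → V} (hX : IsUniformIID μ X) (hγ : IsGrowthRate G γ) :
    Tendsto (fun n : ℕ => (Fintype.card V : ℝ) *
      (∫ ω, ⨆ x, (heightProcess G (fun _ => 0) (fun k => X k ω) n x : ℝ) ∂μ) / n)
      atTop (𝓝 γ) := by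
  have lim := tendsto_integral_of_dominated_convergence (fun _ => (Fintype.card V : ℝ))
    (fun n => (hX.integrable_heightProcess G (fun _ => 0)
      (fun H => (Fintype.card V : ℝ) * (⨆ x, (H x : ℝ)) / n) n).aestronglyMeasurable)
    (integrable_const _) (fun n => ae_of_all _ fun ω => ?_) (hγ.2 μ X hX).1
  · simpa only [integral_div, integral_const_mul, integral_const, probReal_univ, one_smul] using lim
  · have iSup_le : ⨆ x, (heightProcess G (fun _ => 0) (fun k => X k ω) n x : ℝ) ≤ n :=
      ciSup_le fun x => by
        simpa using heightProcess_le (G := G) (h0 := fun _ => 0) (fun _ => le_rfl)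
          (fun k => X k ω) n x
    have iSup_nonneg : 0 ≤ ⨆ x, (heightProcess G (fun _ => 0) (fun k => X k ω) n x : ℝ) :=
      Real.iSup_nonneg fun x => by positivity
    rw [Real.norm_of_nonneg (by positivity)]
    exact div_le_of_le_mul₀ (by positivity) (by positivity) (by gcongr)

lemma IsGrowthRate.le_mul_of_le_generator {Ψ : (V → ℕ) → ℝ} {a r C : ℝ} (hγ : IsGrowthRate G γ)
    (hr : ∀ H, r ≤ generator G Ψ H) (hΨ : ∀ H, Ψ H ≤ a * (⨆ x, (H x : ℝ)) + C) : r ≤ a * γ := by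
  obtain ⟨Ω, _, μ, _, X, hX⟩ := exists_isUniformIID V
  let N : ℝ := Fintype.card V
  let top (H : V → ℕ) : ℝ := ⨆ x, (H x : ℝ)
  let E (Φ : (V → ℕ) → ℝ) (n : ℕ) : ℝ :=
    ∫ ω, Φ (heightProcess G (fun _ => 0) (fun k => X k ω) n) ∂μ
  have int (Φ : (V → ℕ) → ℝ) (n : ℕ) := hX.integrable_heightProcess G (fun _ => 0) Φ n
  have mean_le (n : ℕ) : E Ψ n ≤ a * E top n + C := by
    calc E Ψ n ≤ E (fun H => a * top H + C) n :=
        integral_mono (int Ψ n) (int (fun H => a * top H + C) n) fun _ => hΨ _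
      _ = a * E top n + C := by
        simp [E, integral_add ((int top n).const_mul a) (integrable_const C), integral_const_mul]
  have le_mean (n : ℕ) : N * Ψ (fun _ => 0) + n * r ≤ N * E Ψ n :=
    hX.le_integral_of_le_generator hr n
  have lim_left : Tendsto (fun n : ℕ => r - N * (C - Ψ fun _ => 0) / n) atTop (𝓝 r) := by
    simpa using tendsto_const_nhds.sub
      (tendsto_const_div_atTop_nhds_zero_nat (N * (C - Ψ fun _ => 0)))
  refine le_of_tendsto_of_tendsto lim_left ((hγ.tendsto_integral hX).const_mul a) ?_
  filter_upwards [eventually_gt_atTop 0] with n hn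
  have hn : (0 : ℝ) < n := by exact_mod_cast hn
  have chain := (le_mean n).trans (mul_le_mul_of_nonneg_left (mean_le n) (Nat.cast_nonneg _))
  change _ ≤ a * (N * E top n / n)
  rw [← mul_div_assoc, le_div_iff₀ hn, sub_mul, div_mul_cancel₀ _ hn.ne']
  linarith

end GrowthRate

section UpperBound

open Finset

variable {V : Type*} [Fintype V] {G : SimpleGraph V}

/-- The logarithm of the partition function `∑ exp (H x)`, a smooth upper bound for the
maximal height. -/
noncomputable def logPartition (H : V → ℕ) : ℝ := Real.log (∑ x, Real.exp (H x))

lemma iSup_le_logPartition [Nonempty V] (H : V → ℕ) : ⨆ x, (H x : ℝ) ≤ logPartition H :=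
  ciSup_le fun x => (Real.le_log_iff_exp_le (sum_pos (fun _ _ => Real.exp_pos _) univ_nonempty)).2
    (single_le_sum (f := fun x => Real.exp (H x)) (fun _ _ => (Real.exp_pos _).le) (mem_univ x))

lemma mem_closedNbhd_comm {v w : V} : v ∈ closedNbhd G w ↔ w ∈ closedNbhd G v := by
  simp [closedNbhd, G.adj_comm, eq_comm]

lemma sum_exp_deposit_le (G : SimpleGraph V) (H : V → ℕ) (v : V) :
    ∑ x, Real.exp (deposit G H v x) ≤
      ∑ x, Real.exp (H x) + Real.exp 1 * ∑ y ∈ closedNbhd G v, Real.exp (H y) := by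
  obtain ⟨a, ha, hav⟩ := exists_deposit_self_eq G H v
  have new_height : Real.exp (deposit G H v v) ≤
      Real.exp 1 * ∑ y ∈ closedNbhd G v, Real.exp (H y) := by
    rw [hav, Nat.cast_add, Nat.cast_one, Real.exp_add]
    gcongr
    exact single_le_sum (f := fun y => Real.exp (H y)) (fun _ _ => (Real.exp_pos _).le) ha
  have old_heights : ∑ x ∈ univ.erase v, Real.exp (deposit G H v x) ≤ ∑ x, Real.exp (H x) :=
    calc ∑ x ∈ univ.erase v, Real.exp (deposit G H v x)
        = ∑ x ∈ univ.erase v, Real.exp (H x) := sum_congr rfl fun x hx => by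
          rw [deposit, Function.update_of_ne (ne_of_mem_erase hx)]
      _ ≤ ∑ x, Real.exp (H x) := sum_le_univ_sum_of_nonneg fun _ => (Real.exp_pos _).le
  rw [← sum_erase_add _ _ (mem_univ v)]
  exact add_le_add old_heights new_height

lemma sum_sum_closedNbhd_le {Δ : ℕ} (hΔ : ∀ v, G.degree v ≤ Δ) {f : V → ℝ} (hf : 0 ≤ f) :
    ∑ v, ∑ y ∈ closedNbhd G v, f y ≤ (Δ + 1) * ∑ v, f v := by
  have card_le (v : V) : #(closedNbhd G v) ≤ Δ + 1 :=
    (card_insert_le _ _).trans (Nat.add_le_add_right (hΔ v) 1)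
  calc ∑ v, ∑ y ∈ closedNbhd G v, f y = ∑ y, ∑ _v ∈ closedNbhd G y, f y :=
        sum_comm' (by simp [mem_closedNbhd_comm])
    _ = ∑ y, #(closedNbhd G y) * f y := by simp only [sum_const, nsmul_eq_mul]
    _ ≤ ∑ y, (Δ + 1) * f y :=
        sum_le_sum fun y _ => mul_le_mul_of_nonneg_right (by exact_mod_cast card_le y) (hf y)
    _ = (Δ + 1) * ∑ v, f v := (mul_sum ..).symm

lemma generator_logPartition_le {Δ : ℕ} (hΔ : ∀ v, G.degree v ≤ Δ) (H : V → ℕ) [Nonempty V] :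
    generator G logPartition H ≤ Real.exp 1 * (Δ + 1) := by
  have sum_exp_pos (H : V → ℕ) : 0 < ∑ x, Real.exp (H x) :=
    sum_pos (fun _ _ => Real.exp_pos _) univ_nonempty
  set S := ∑ x, Real.exp (H x) with hS
  have S_pos : 0 < S := sum_exp_pos H
  have gain_le (v : V) : logPartition (deposit G H v) - logPartition H ≤
      Real.exp 1 / S * ∑ y ∈ closedNbhd G v, Real.exp (H y) :=
    calc logPartition (deposit G H v) - logPartition H
        = Real.log ((∑ x, Real.exp (deposit G H v x)) / S) :=
          (Real.log_div (sum_exp_pos _).ne' S_pos.ne').symm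
      _ ≤ (∑ x, Real.exp (deposit G H v x)) / S - 1 :=
          Real.log_le_sub_one_of_pos (div_pos (sum_exp_pos _) S_pos)
      _ ≤ (S + Real.exp 1 * ∑ y ∈ closedNbhd G v, Real.exp (H y)) / S - 1 := by
          gcongr
          exact sum_exp_deposit_le G H v
      _ = Real.exp 1 / S * ∑ y ∈ closedNbhd G v, Real.exp (H y) := by field_simp; ring
  calc generator G logPartition H
      ≤ ∑ v, Real.exp 1 / S * ∑ y ∈ closedNbhd G v, Real.exp (H y) :=
        sum_le_sum fun _ _ => gain_le _
    _ ≤ Real.exp 1 / S * ((Δ + 1) * S) := by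
        rw [← mul_sum]
        gcongr
        exact sum_sum_closedNbhd_le hΔ fun _ => (Real.exp_pos _).le
    _ = Real.exp 1 * (Δ + 1) := by field_simp

lemma IsGrowthRate.le_exp_one_mul [Nonempty V] {γ : ℝ} {Δ : ℕ} (hγ : IsGrowthRate G γ)
    (hΔ : ∀ v, G.degree v ≤ Δ) : γ ≤ Real.exp 1 * (Δ + 1) := by
  have drift (H : V → ℕ) :
      -(Real.exp 1 * (Δ + 1)) ≤ generator G (fun H => -logPartition H) H := by
    have generator_neg :
        generator G (fun H => -logPartition H) H = -generator G logPartition H := by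
      simp only [generator, ← sum_neg_distrib]
      exact sum_congr rfl fun _ _ => by ring
    rw [generator_neg]
    exact neg_le_neg (generator_logPartition_le hΔ H)
  have bound (H : V → ℕ) : -logPartition H ≤ -1 * (⨆ x, (H x : ℝ)) + 0 := by
    linarith [iSup_le_logPartition H]
  linarith [hγ.le_mul_of_le_generator drift bound]

end UpperBound

section Codegree

open Finset

lemma card_mul_le_card_biUnion_add {ι α : Type*} {δ κ : ℕ} (f : ι → Finset α) (A : Finset ι)
    (hδ : ∀ a ∈ A, δ ≤ #(f a)) (hκ : ∀ a ∈ A, ∀ b ∈ A, a ≠ b → #(f a ∩ f b) ≤ κ) :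
    #A * δ ≤ #(A.biUnion f) + (#A).choose 2 * κ := by
  induction A using Finset.induction_on with
  | empty => simp
  | insert a A ha ih =>
    have ih := ih (fun b hb => hδ b (mem_insert_of_mem hb)) fun b hb c hc =>
      hκ b (mem_insert_of_mem hb) c (mem_insert_of_mem hc)
    have overlap : #(f a ∩ A.biUnion f) ≤ #A * κ := by
      rw [inter_biUnion]
      refine card_biUnion_le_card_mul _ _ _ fun b hb => ?_
      exact hκ a (mem_insert_self ..) b (mem_insert_of_mem hb) (ne_of_mem_of_not_mem hb ha).symm
    have union := card_union_add_card_inter (f a) (A.biUnion f)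
    rw [card_insert_of_notMem ha, biUnion_insert, Nat.choose_succ_succ, Nat.choose_one_right]
    linarith [hδ a (mem_insert_self ..)]

variable {V : Type*} {G : SimpleGraph V}

lemma commonNeighbors_subsingleton_of_five_le_egirth (hG : 5 ≤ G.egirth) {a b : V} (hab : a ≠ b) :
    (G.commonNeighbors a b).Subsingleton := by
  intro c hc d hd
  by_contra hcd
  have hc := G.mem_commonNeighbors.mp hc
  have hd := G.mem_commonNeighbors.mp hd
  let square : G.Walk a a :=
    .cons hc.1 (.cons hc.2.symm (.cons hd.2 (.cons hd.1.symm .nil)))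
  have square_isCycle : square.IsCycle := by
    simp [square, SimpleGraph.Walk.isCycle_def, SimpleGraph.Walk.isTrail_def, hab, hab.symm, hcd,
      hc.1.ne, hc.1.ne', hc.2.ne', hd.1.ne, hd.1.ne', hd.2.ne]
  have five_le_four : (5 : ℕ∞) ≤ 4 := hG.trans (SimpleGraph.egirth_le_length square_isCycle)
  exact absurd five_le_four (by decide)

end Codegree

section TwoLevelPotential

open Finset

variable {V : Type*} [Fintype V] {G : SimpleGraph V} {H : V → ℕ} {M s c δ κ : ℕ}
  {φ : Fin (M + 1) → Fin (M + 1) → ℕ}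

/-- The set of vertices of height at least `h`. -/
noncomputable def superlevel (H : V → ℕ) (h : ℕ) : Finset V := univ.filter fun x => h ≤ H x

lemma mem_superlevel {h : ℕ} {x : V} : x ∈ superlevel H h ↔ h ≤ H x := by simp [superlevel]

lemma superlevel_subset_superlevel {H' : V → ℕ} (hH : H ≤ H') {h h' : ℕ} (hh : h' ≤ h) :
    superlevel H h ⊆ superlevel H' h' := fun x hx =>
  mem_superlevel.2 (hh.trans ((mem_superlevel.1 hx).trans (hH x)))

lemma card_add_one_le_card_superlevel_deposit {h : ℕ} {T : Finset V} (hT : T ⊆ superlevel H h)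
    {v : V} (hv : v ∉ T) (hh : h ≤ deposit G H v v) :
    #T + 1 ≤ #(superlevel (deposit G H v) h) := by
  rw [← card_insert_of_notMem hv]
  refine card_le_card (insert_subset (mem_superlevel.2 hh) ?_)
  exact hT.trans (superlevel_subset_superlevel (le_deposit G H v) le_rfl)

/-- The potential of a height profile with `m` vertices of height at least `h` and `k` vertices of
height at least `h + 1`, both counted up to `M`, is `s * h + φ m k`, for the best level `h`: the
table `φ` measures the progress made towards the next level, in units of `1 / s` of a height. -/
noncomputable def twoLevelPotential (φ : Fin (M + 1) → Fin (M + 1) → ℕ) (s : ℕ) (H : V → ℕ) : ℕ :=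
  (range (univ.sup H + 1)).sup fun h =>
    s * h + φ (Fin.clamp #(superlevel H h) M) (Fin.clamp #(superlevel H (h + 1)) M)

/-- The condition on the table `φ` under which every profile gains at least `c` in
`twoLevelPotential`, per neighbour of a vertex and up to boundary effects. In state `(i, k)`, a
neighbour of one of the `i` vertices at the lower level moves the state to `(i + 1, k + 1)`, and a
neighbour of one of the `k` vertices at the upper level can also be counted as the first vertex
above it, which gives state `(k + 1, 1)` one level higher. -/
structure IsDriftCertificate (φ : Fin (M + 1) → Fin (M + 1) → ℕ) (s c : ℕ) : Prop where
  pos : 0 < M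
  mono : ∀ i j k l, i ≤ j → k ≤ l → φ i k ≤ φ j l
  drift : ∀ i k : Fin (M + 1), i ≠ 0 → k ≤ i →
    i * φ i k + c ≤ (i - k) * φ (Fin.clamp (i + 1) M) (Fin.clamp (k + 1) M) +
      k * max (φ (Fin.clamp (i + 1) M) (Fin.clamp (k + 1) M))
        (s + φ (Fin.clamp (k + 1) M) (Fin.clamp 1 M))

lemma exists_twoLevelPotential_eq [Nonempty V] (φ : Fin (M + 1) → Fin (M + 1) → ℕ) (s : ℕ)
    (H : V → ℕ) :
    ∃ h, (superlevel H h).Nonempty ∧ twoLevelPotential φ s H =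
      s * h + φ (Fin.clamp #(superlevel H h) M) (Fin.clamp #(superlevel H (h + 1)) M) := by
  obtain ⟨h, hh, h_eq⟩ := exists_mem_eq_sup (range (univ.sup H + 1)) (nonempty_range_add_one)
    fun h => s * h + φ (Fin.clamp #(superlevel H h) M) (Fin.clamp #(superlevel H (h + 1)) M)
  obtain ⟨x, -, hx⟩ := exists_mem_eq_sup univ univ_nonempty H
  exact ⟨h, ⟨x, mem_superlevel.2 (hx ▸ Nat.le_of_lt_succ (mem_range.1 hh))⟩, h_eq⟩

lemma IsDriftCertificate.le_twoLevelPotential (hφ : IsDriftCertificate φ s c) {h m k : ℕ}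
    (hm : m ≤ #(superlevel H h)) (hk : k ≤ #(superlevel H (h + 1)))
    (hh : (superlevel H h).Nonempty) :
    s * h + φ (Fin.clamp m M) (Fin.clamp k M) ≤ twoLevelPotential φ s H := by
  obtain ⟨x, hx⟩ := hh
  have h_mem : h ∈ range (univ.sup H + 1) :=
    mem_range.2 (Nat.lt_succ_of_le ((mem_superlevel.1 hx).trans (le_sup (mem_univ x))))
  refine le_trans ?_ (le_sup (f := fun h => s * h + φ (Fin.clamp #(superlevel H h) M)
    (Fin.clamp #(superlevel H (h + 1)) M)) h_mem)
  gcongr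
  exact hφ.mono _ _ _ _ (Fin.clamp_monotone hm) (Fin.clamp_monotone hk)

lemma IsDriftCertificate.twoLevelPotential_mono [Nonempty V] (hφ : IsDriftCertificate φ s c) :
    Monotone (twoLevelPotential φ s : (V → ℕ) → ℕ) := by
  intro H H' hH
  obtain ⟨h, hh, h_eq⟩ := exists_twoLevelPotential_eq φ s H
  rw [h_eq]
  exact hφ.le_twoLevelPotential (card_le_card (superlevel_subset_superlevel hH le_rfl))
    (card_le_card (superlevel_subset_superlevel hH le_rfl))
    (hh.mono (superlevel_subset_superlevel hH le_rfl))

lemma IsDriftCertificate.twoLevelPotential_le [Nonempty V] (hφ : IsDriftCertificate φ s c)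
    (H : V → ℕ) :
    (twoLevelPotential φ s H : ℝ) ≤ s * (⨆ x, (H x : ℝ)) + φ ⊤ ⊤ := by
  obtain ⟨h, ⟨x, hx⟩, h_eq⟩ := exists_twoLevelPotential_eq φ s H
  have h_le : (h : ℝ) ≤ ⨆ x, (H x : ℝ) :=
    (Nat.cast_le.2 (mem_superlevel.1 hx)).trans
      (le_ciSup (f := fun x => (H x : ℝ)) (Set.finite_range _).bddAbove x)
  rw [h_eq]
  push_cast
  gcongr
  exact hφ.mono _ _ _ _ le_top le_top

lemma mul_card_add_mul_card_le_generator {Ψ : (V → ℕ) → ℝ} {P Q : Finset V} {u w : ℝ}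
    (hQP : Q ⊆ P) (hΨ : ∀ v, Ψ H ≤ Ψ (deposit G H v))
    (hP : ∀ v ∈ P, Ψ H + u ≤ Ψ (deposit G H v))
    (hQ : ∀ v ∈ Q, Ψ H + u + w ≤ Ψ (deposit G H v)) :
    u * #P + w * #Q ≤ generator G Ψ H := by
  calc u * #P + w * #Q = ∑ v, ((if v ∈ P then u else 0) + if v ∈ Q then w else 0) := by
        simp [sum_add_distrib, mul_comm]
    _ ≤ generator G Ψ H := sum_le_sum fun v _ => by
        by_cases hvQ : v ∈ Q
        · rw [if_pos (hQP hvQ), if_pos hvQ]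
          linarith [hQ v hvQ]
        · rw [if_neg hvQ, add_zero]
          split_ifs with hvP
          · linarith [hP v hvP]
          · linarith [hΨ v]

/-- The vertices outside `A` that have a neighbour in `T`. -/
noncomputable def outerNbhd (G : SimpleGraph V) (T A : Finset V) : Finset V :=
  T.biUnion (fun a => G.neighborFinset a) \ A

lemma mem_outerNbhd {T A : Finset V} {v : V} :
    v ∈ outerNbhd G T A ↔ v ∉ A ∧ ∃ a ∈ T, G.Adj a v := by
  simp [outerNbhd, and_comm]

lemma card_mul_le_card_outerNbhd_add (hδ : ∀ v, δ ≤ G.degree v)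
    (hκ : ∀ a b, a ≠ b → (G.commonNeighbors a b).ncard ≤ κ) (T A : Finset V) :
    #T * δ ≤ #(outerNbhd G T A) + ((#T).choose 2 * κ + #A) := by
  have bonferroni := card_mul_le_card_biUnion_add (fun a => G.neighborFinset a) T
    (fun a _ => hδ a) (κ := κ) fun a _ b _ hab => by
      have coe_inter : (↑(G.neighborFinset a ∩ G.neighborFinset b) : Set V) =
          G.commonNeighbors a b := by
        simp [SimpleGraph.commonNeighbors]
      rw [← Set.ncard_coe_finset, coe_inter]
      exact hκ a b hab
  have := le_card_sdiff A (T.biUnion fun a => G.neighborFinset a)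
  rw [outerNbhd]
  lia

lemma exists_nested_twoLevelPotential_eq [Nonempty V] (hM : 0 < M)
    (φ : Fin (M + 1) → Fin (M + 1) → ℕ) (s : ℕ) (H : V → ℕ) :
    ∃ (h : ℕ) (A B : Finset V) (i k : Fin (M + 1)), B ⊆ A ∧ A ⊆ superlevel H h ∧
      B ⊆ superlevel H (h + 1) ∧ #A = i ∧ #B = k ∧ i ≠ 0 ∧
      twoLevelPotential φ s H = s * h + φ i k := by
  obtain ⟨h, hh, h_eq⟩ := exists_twoLevelPotential_eq φ s H
  have nested : superlevel H (h + 1) ⊆ superlevel H h :=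
    superlevel_subset_superlevel le_rfl h.le_succ
  obtain ⟨B, hB, B_card⟩ := exists_subset_card_eq (min_le_left #(superlevel H (h + 1)) M)
  obtain ⟨A, hBA, hA, A_card⟩ := exists_subsuperset_card_eq (hB.trans nested)
    (B_card.trans_le (min_le_min_right M (card_le_card nested)))
    (min_le_left #(superlevel H h) M)
  exact ⟨h, A, B, _, _, hBA, hA, hB, A_card, B_card,
    Fin.val_ne_zero_iff.1 (lt_min hh.card_pos hM).ne', h_eq⟩

lemma IsDriftCertificate.le_twoLevelPotential_deposit (hφ : IsDriftCertificate φ s c) {h : ℕ}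
    {A B : Finset V} (hBA : B ⊆ A) (hA : A ⊆ superlevel H h) (hB : B ⊆ superlevel H (h + 1)) {v : V}
    (hv : v ∈ outerNbhd G A A) :
    s * h + φ (Fin.clamp (#A + 1) M) (Fin.clamp (#B + 1) M) ≤
      twoLevelPotential φ s (deposit G H v) := by
  obtain ⟨hvA, a, ha, hav⟩ := mem_outerNbhd.1 hv
  have height : h + 1 ≤ deposit G H v v :=
    (Nat.succ_le_succ (mem_superlevel.1 (hA ha))).trans
      (lt_deposit_self (mem_insert_of_mem ((G.mem_neighborFinset v a).2 hav.symm)))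
  exact hφ.le_twoLevelPotential
    (card_add_one_le_card_superlevel_deposit hA hvA (h.le_succ.trans height))
    (card_add_one_le_card_superlevel_deposit hB (fun hvB => hvA (hBA hvB)) height)
    ⟨v, mem_superlevel.2 (h.le_succ.trans height)⟩

lemma IsDriftCertificate.max_le_twoLevelPotential_deposit (hφ : IsDriftCertificate φ s c) {h : ℕ}
    {A B : Finset V} (hBA : B ⊆ A) (hA : A ⊆ superlevel H h) (hB : B ⊆ superlevel H (h + 1)) {v : V}
    (hv : v ∈ outerNbhd G B A) :
    s * h + max (φ (Fin.clamp (#A + 1) M) (Fin.clamp (#B + 1) M))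
      (s + φ (Fin.clamp (#B + 1) M) (Fin.clamp 1 M)) ≤ twoLevelPotential φ s (deposit G H v) := by
  obtain ⟨hvA, b, hb, hbv⟩ := mem_outerNbhd.1 hv
  have via_lower := hφ.le_twoLevelPotential_deposit hBA hA hB
    (mem_outerNbhd.2 ⟨hvA, b, hBA hb, hbv⟩)
  have via_upper := hφ.le_twoLevelPotential_deposit (empty_subset B) hB (empty_subset _)
    (mem_outerNbhd.2 ⟨fun hvB => hvA (hBA hvB), b, hb, hbv⟩)
  rw [card_empty, zero_add] at via_upper
  lia

lemma IsDriftCertificate.gain_le {i k : Fin (M + 1)} (hφ : IsDriftCertificate φ s c) (hi : i ≠ 0)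
    (hki : k ≤ i) {δ p q e : ℝ} (hδ : 0 ≤ δ) (he : 0 ≤ e) (hp : i * δ ≤ p + e)
    (hq : k * δ ≤ q + e) {x y : ℕ} (hx : x = φ (Fin.clamp (i + 1) M) (Fin.clamp (k + 1) M))
    (hy : y = max x (s + φ (Fin.clamp (k + 1) M) (Fin.clamp 1 M))) :
    c * δ - e * (s + φ ⊤ ⊤) ≤ ((x : ℝ) - φ i k) * p + ((y : ℝ) - x) * q := by
  have φ_le_x : (φ i k : ℝ) ≤ x := by
    rw [hx, Nat.cast_le]
    refine hφ.mono _ _ _ _ (Fin.le_def.2 ?_) (Fin.le_def.2 ?_) <;> simp <;> lia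
  have x_le_y : (x : ℝ) ≤ y := Nat.cast_le.2 (hy ▸ le_max_left ..)
  have y_le : (y : ℝ) ≤ s + φ ⊤ ⊤ := by
    have := hφ.mono (Fin.clamp (i + 1) M) ⊤ (Fin.clamp (k + 1) M) ⊤ le_top le_top
    have := hφ.mono (Fin.clamp (k + 1) M) ⊤ (Fin.clamp 1 M) ⊤ le_top le_top
    norm_cast
    lia
  have drift : (i * φ i k + c : ℝ) ≤ (i - k) * x + k * y := by
    have := hφ.drift i k hi hki
    rw [← hx, ← hy] at this
    rw [← Nat.cast_sub (Fin.le_def.1 hki)]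
    exact_mod_cast this
  have drift := mul_le_mul_of_nonneg_left drift hδ
  have hp := mul_le_mul_of_nonneg_left hp (sub_nonneg.2 φ_le_x)
  have hq := mul_le_mul_of_nonneg_left hq (sub_nonneg.2 x_le_y)
  have loss : (y - φ i k) * e ≤ (s + φ ⊤ ⊤) * e := by
    gcongr
    linarith [(φ i k).cast_nonneg (α := ℝ)]
  linarith

lemma IsDriftCertificate.le_generator_twoLevelPotential [Nonempty V]
    (hφ : IsDriftCertificate φ s c) (hδ : ∀ v, δ ≤ G.degree v)
    (hκ : ∀ a b, a ≠ b → (G.commonNeighbors a b).ncard ≤ κ) (H : V → ℕ) :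
    (c * δ - (M.choose 2 * κ + M) * (s + φ ⊤ ⊤) : ℝ) ≤
      generator G (fun H => (twoLevelPotential φ s H : ℝ)) H := by
  obtain ⟨h, A, B, i, k, hBA, hA, hB, A_card, B_card, hi, h_eq⟩ :=
    exists_nested_twoLevelPotential_eq hφ.pos φ s H
  have hki : k ≤ i := Fin.le_def.2 (A_card ▸ B_card ▸ card_le_card hBA)
  have le_card {T : Finset V} {j : Fin (M + 1)} (hT : #T = j) :
      (j * δ : ℝ) ≤ #(outerNbhd G T A) + (M.choose 2 * κ + M) := by
    have choose_le : (#T).choose 2 * κ ≤ M.choose 2 * κ := by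
      gcongr
      exact hT ▸ j.is_le
    exact_mod_cast hT ▸ (card_mul_le_card_outerNbhd_add hδ hκ T A).trans
      (Nat.add_le_add_left (add_le_add choose_le (A_card ▸ i.is_le)) _)
  set x := φ (Fin.clamp (i + 1) M) (Fin.clamp (k + 1) M) with hx
  set y := max x (s + φ (Fin.clamp (k + 1) M) (Fin.clamp 1 M)) with hy
  refine (hφ.gain_le hi hki δ.cast_nonneg (by positivity) (le_card A_card) (le_card B_card)
    hx hy).trans (mul_card_add_mul_card_le_generator ?_ ?_ ?_ ?_)
  · exact sdiff_subset_sdiff (biUnion_subset_biUnion_of_subset_left _ hBA) subset_rfl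
  · exact fun v => Nat.cast_le.2 (hφ.twoLevelPotential_mono (le_deposit G H v))
  · intro v hv
    have gain := Nat.cast_le (α := ℝ).2 (hφ.le_twoLevelPotential_deposit hBA hA hB hv)
    rw [A_card, B_card, ← hx, Nat.cast_add] at gain
    rw [h_eq, Nat.cast_add]
    linarith
  · intro v hv
    have gain := Nat.cast_le (α := ℝ).2 (hφ.max_le_twoLevelPotential_deposit hBA hA hB hv)
    rw [A_card, B_card, ← hx, ← hy, Nat.cast_add] at gain
    rw [h_eq, Nat.cast_add]
    linarith

end TwoLevelPotential

section LowerBound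

variable {V : Type*} [Fintype V] [Nonempty V] {G : SimpleGraph V} {γ : ℝ} {M s c δ κ : ℕ}

lemma IsGrowthRate.le_mul_of_isDriftCertificate (hγ : IsGrowthRate G γ)
    {φ : Fin (M + 1) → Fin (M + 1) → ℕ} (hφ : IsDriftCertificate φ s c)
    (hδ : ∀ v, δ ≤ G.degree v) (hκ : ∀ a b, a ≠ b → (G.commonNeighbors a b).ncard ≤ κ) :
    (c * δ - (M.choose 2 * κ + M) * (s + φ ⊤ ⊤) : ℝ) ≤ s * γ :=
  hγ.le_mul_of_le_generator (hφ.le_generator_twoLevelPotential hδ hκ) hφ.twoLevelPotential_le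

/-- A table with drift `20 / 13` heights: a rounding of the relative value function of the Markov
chain on the states `(i, k)` counted up to `4`, in units of `1 / 13` of a height. -/
def driftTable : Fin 5 → Fin 5 → ℕ :=
  ![![0, 0, 0, 0, 0],
    ![0, 13, 13, 13, 13],
    ![13, 20, 26, 26, 26],
    ![17, 23, 27, 30, 30],
    ![19, 24, 28, 30, 30]]

lemma isDriftCertificate_driftTable : IsDriftCertificate (M := 4) driftTable 13 20 where
  pos := by decide
  mono := by decide
  drift := by decide

lemma IsGrowthRate.twenty_mul_sub_le (hγ : IsGrowthRate G γ) (hδ : ∀ v, δ ≤ G.degree v)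
    (hκ : ∀ a b, a ≠ b → (G.commonNeighbors a b).ncard ≤ κ) :
    (20 * δ - 43 * (6 * κ + 4) : ℝ) ≤ 13 * γ := by
  have h := hγ.le_mul_of_isDriftCertificate isDriftCertificate_driftTable hδ hκ
  have table_top : driftTable ⊤ ⊤ = 30 := rfl
  rw [table_top, show Nat.choose 4 2 = 6 from rfl] at h
  norm_num at h
  linarith

end LowerBound

theorem stmt16_general (V : ℕ → Type*) [∀ k, Fintype (V k)] [∀ k, Nonempty (V k)]
    (G : ∀ k, SimpleGraph (V k)) (δ Δ κ : ℕ → ℕ) (γ : ℕ → ℝ)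
    (hδ : ∀ k v, δ k ≤ (G k).degree v) (hΔ : ∀ k v, (G k).degree v ≤ Δ k)
    (hκ : ∀ k a b, a ≠ b → ((G k).commonNeighbors a b).ncard ≤ κ k)
    (hδ_top : Tendsto δ atTop atTop)
    (hΔδ : (fun k => (Δ k : ℝ)) =O[atTop] fun k => (δ k : ℝ))
    (hκδ : (fun k => (κ k : ℝ)) =o[atTop] fun k => (δ k : ℝ))
    (hγ : ∀ k, IsGrowthRate (G k) (γ k)) :
    20 / 13 ≤ atTop.liminf fun k => γ k / δ k := by
  have lower_tendsto : Tendsto (fun k => 20 / 13 - 43 / 13 * (6 * (κ k / δ k : ℝ) + 4 / δ k)) atTop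
      (𝓝 (20 / 13)) := by
    have inv_tendsto : Tendsto (fun k => 4 / (δ k : ℝ)) atTop (𝓝 0) :=
      (tendsto_const_div_atTop_nhds_zero_nat 4).comp hδ_top
    simpa using (((hκδ.tendsto_div_nhds_zero.const_mul 6).add inv_tendsto).const_mul
      (43 / 13)).const_sub (20 / 13)
  have lower_le : ∀ᶠ k in atTop,
      20 / 13 - 43 / 13 * (6 * (κ k / δ k : ℝ) + 4 / δ k) ≤ γ k / δ k := by
    filter_upwards [hδ_top.eventually_gt_atTop 0] with k hk
    have hk : (0 : ℝ) < δ k := Nat.cast_pos.2 hk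
    rw [le_div_iff₀ hk]
    field_simp
    linarith [(hγ k).twenty_mul_sub_le (hδ k) (hκ k)]
  obtain ⟨K, K_nonneg, hK⟩ := hΔδ.exists_nonneg
  have le_upper : ∀ᶠ k in atTop, γ k / δ k ≤ Real.exp 1 * (K + 1) := by
    filter_upwards [hK.bound, hδ_top.eventually_gt_atTop 0] with k hk hk_pos
    simp only [RCLike.norm_natCast] at hk
    have hk_one : (1 : ℝ) ≤ δ k := Nat.one_le_cast.2 hk_pos
    refine div_le_of_le_mul₀ (by positivity) (by positivity)
      (((hγ k).le_exp_one_mul (hΔ k)).trans ?_)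
    rw [mul_assoc]
    gcongr
    linarith
  rw [← lower_tendsto.liminf_eq]
  exact liminf_le_liminf lower_le lower_tendsto.isBoundedUnder_ge
    (isCoboundedUnder_ge_of_eventually_le atTop le_upper)

lemma two_mul_exp_one_sub_one_div_le : (2 * Real.exp 1 - 1) / (Real.exp 1 - 1) ^ 2 ≤ 20 / 13 := by
  have := Real.exp_one_gt_d9
  rw [div_le_div_iff₀ (by nlinarith) (by norm_num)]
  nlinarith

theorem stmt16 (V : ℕ → Type) [∀ k, Fintype (V k)]
    (G : ∀ k, SimpleGraph (V k)) (d : ℕ → ℕ) (γ : ℕ → ℝ)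
    (hconn : ∀ k, (G k).Connected)
    (hreg : ∀ k, (G k).IsRegularOfDegree (d k))
    (hgirth : ∀ k, 5 ≤ (G k).egirth)
    (hd : Tendsto d atTop atTop)
    (hγ : ∀ k, IsGrowthRate (G k) (γ k)) :
    (2 * Real.exp 1 - 1) / (Real.exp 1 - 1) ^ 2 ≤
      Filter.atTop.liminf (fun k => γ k / d k) := by
  have (k : ℕ) : Nonempty (V k) := (hconn k).nonempty
  have isLittleO_one : (fun _ => ((1 : ℕ) : ℝ)) =o[atTop] fun k => (d k : ℝ) :=
    Asymptotics.isLittleO_const_left.2 <| .inr <|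
      tendsto_norm_atTop_atTop.comp (tendsto_natCast_atTop_atTop.comp hd)
  exact two_mul_exp_one_sub_one_div_le.trans <| stmt16_general V G d d (fun _ => 1) γ
    (fun k v => (hreg k v).ge) (fun k v => (hreg k v).le)
    (fun k _ _ hab => Set.ncard_le_one_iff_subsingleton.2
      (commonNeighbors_subsingleton_of_five_le_egirth (hgirth k) hab))
    hd (Asymptotics.isBigO_refl _ _) isLittleO_one hγ
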